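/- For all polynomials v and w of degree at most p, there holds ∫_{−1}^{1} (I v)'(s) w(s) ds = ∫_{−1}^{1} v'(s) w(s) ds + v(−1) w(−1). -/

import Mathlib

open Polynomial

/-- The `k`-th Legendre polynomial (Rodrigues' formula), normalized so that `L_k(1) = 1`
and `∫_{−1}^{1} L_k L_j ds = 2δ_{kj}/(2k+1)`. -/
noncomputable def legendre (k : ℕ) : Polynomial ℝ :=
  ((2 ^ k * (Nat.factorial k) : ℝ))⁻¹ •
    ((fun q => Polynomial.derivative q)^[k] ((Polynomial.X ^ 2 - 1) ^ k))

/-- The reconstruction operator `I : P_p → P_{p+1}`,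
`I v := v − v(−1)·(−1)^p (L_p − L_{p+1})/2`. -/
noncomputable def recon (p : ℕ) (v : Polynomial ℝ) : Polynomial ℝ :=
  v - (v.eval (-1) * (-1 : ℝ) ^ p / 2) • (legendre p - legendre (p + 1))

theorem aux_ibp (f q : Polynomial ℝ) :
    (∫ s in (-1 : ℝ)..1, (derivative f).eval s * q.eval s)
      = f.eval 1 * q.eval 1 - f.eval (-1) * q.eval (-1)
        - ∫ s in (-1 : ℝ)..1, f.eval s * (derivative q).eval s := by
  have h := intervalIntegral.integral_mul_deriv_eq_deriv_mul (a := -1) (b := 1)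
    (u := fun s => q.eval s) (v := fun s => f.eval s)
    (u' := fun s => (derivative q).eval s) (v' := fun s => (derivative f).eval s)
    (fun x _ => q.hasDerivAt x) (fun x _ => f.hasDerivAt x)
    ((derivative q).continuous.intervalIntegrable _ _)
    ((derivative f).continuous.intervalIntegrable _ _)
  simp only [mul_comm] at h ⊢
  exact h

theorem aux_orth (f : Polynomial ℝ) (m : ℕ)
    (h1 : ∀ i < m, (derivative^[i] f).eval 1 = 0)
    (h2 : ∀ i < m, (derivative^[i] f).eval (-1) = 0) (q : Polynomial ℝ)
    (hq : derivative^[m] q = 0) :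
    (∫ s in (-1 : ℝ)..1, (derivative^[m] f).eval s * q.eval s) = 0 := by
  induction m generalizing q with
  | zero =>
    simp only [Function.iterate_zero, id] at hq
    simp [hq]
  | succ m ih =>
    rw [Function.iterate_succ_apply', aux_ibp, h1 m (by omega), h2 m (by omega),
      ih (fun i hi => h1 i (by omega)) (fun i hi => h2 i (by omega)) _ hq]
    simp

theorem aux_fac1 (k : ℕ) : ((X : Polynomial ℝ) ^ 2 - 1) ^ k = (X - C 1) ^ k * (X + 1) ^ k := by
  rw [← mul_pow]; congr 1; simp only [map_one]; ring

theorem aux_fac2 (k : ℕ) : ((X : Polynomial ℝ) ^ 2 - 1) ^ k = (X - C (-1)) ^ k * (X - 1) ^ k := by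
  rw [← mul_pow]; congr 1; simp only [map_one, map_neg]; ring

theorem aux_vanish (k i : ℕ) (hi : i < k) (a : ℝ) (f : Polynomial ℝ) (h : (X - C a) ^ k ∣ f) :
    (derivative^[i] f).eval a = 0 := by
  have h3 := pow_sub_dvd_iterate_derivative_of_pow_dvd i h
  exact dvd_iff_isRoot.1 ((dvd_pow_self _ (by omega)).trans h3)

theorem aux_legendre_orth (k : ℕ) (q : Polynomial ℝ) (hq : derivative^[k] q = 0) :
    (∫ s in (-1 : ℝ)..1, (legendre k).eval s * q.eval s) = 0 := by
  have h := aux_orth (((X : Polynomial ℝ) ^ 2 - 1) ^ k) k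
    (fun i hi => aux_vanish k i hi _ _ ⟨_, aux_fac1 k⟩)
    (fun i hi => aux_vanish k i hi _ _ ⟨_, aux_fac2 k⟩) q hq
  simp only [legendre, eval_smul, smul_eq_mul, mul_assoc, intervalIntegral.integral_const_mul]
  exact mul_eq_zero_of_right _ h

theorem aux_legendre_one (k : ℕ) : (legendre k).eval 1 = 1 := by
  have h := aeval_iterate_derivative_self (((X : Polynomial ℝ) ^ 2 - 1) ^ k) k (A := ℝ) 1
    (p' := (X + 1) ^ k) (by simpa using aux_fac1 k)
  rw [coe_aeval_eq_eval] at h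
  have hk : (Nat.factorial k : ℝ) ≠ 0 := by positivity
  rw [legendre, eval_smul]
  refine (congrArg _ h).trans ?_
  simp only [eval_pow, eval_add, eval_X, eval_one, smul_eq_mul, nsmul_eq_mul]
  norm_num
  field_simp

theorem aux_legendre_neg_one (k : ℕ) : (legendre k).eval (-1) = (-1) ^ k := by
  have h := aeval_iterate_derivative_self (((X : Polynomial ℝ) ^ 2 - 1) ^ k) k (A := ℝ) (-1)
    (p' := (X - 1) ^ k) (by simpa using aux_fac2 k)
  rw [coe_aeval_eq_eval] at h
  have hk : (Nat.factorial k : ℝ) ≠ 0 := by positivity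
  rw [legendre, eval_smul]
  refine (congrArg _ h).trans ?_
  simp only [eval_pow, eval_sub, eval_X, eval_one, smul_eq_mul, nsmul_eq_mul]
  rw [show (-1 - 1 : ℝ) = (-1) * 2 by norm_num, mul_pow]
  field_simp

/-- **Integration-by-parts identity for the reconstruction.** For all polynomials `v`, `w` of
degree at most `p`, `∫_{−1}^{1} (I v)' w ds = ∫_{−1}^{1} v' w ds + v(−1) w(−1)`. -/
theorem recon_deriv_identity (p : ℕ) (v w : Polynomial ℝ)
    (hv : v.natDegree ≤ p) (hw : w.natDegree ≤ p) :
    (∫ s in (-1 : ℝ)..1, (Polynomial.derivative (recon p v)).eval s * w.eval s)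
      = (∫ s in (-1 : ℝ)..1, (Polynomial.derivative v).eval s * w.eval s)
        + v.eval (-1) * w.eval (-1) := by
  have hd : derivative^[p] (derivative w) = 0 := by
    rw [← Function.iterate_succ_apply]
    exact iterate_derivative_eq_zero (by omega)
  have hd' : derivative^[p + 1] (derivative w) = 0 := by
    rw [Function.iterate_succ_apply', hd, derivative_zero]
  have key : (∫ s in (-1 : ℝ)..1, (derivative (legendre p - legendre (p + 1))).eval s * w.eval s)
      = - (2 * (-1) ^ p * w.eval (-1)) := by
    rw [aux_ibp]
    have h0 : (∫ s in (-1 : ℝ)..1,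
        (legendre p - legendre (p + 1)).eval s * (derivative w).eval s) = 0 := by
      simp only [eval_sub, sub_mul]
      rw [intervalIntegral.integral_sub
        (Continuous.intervalIntegrable (by fun_prop) _ _)
        (Continuous.intervalIntegrable (by fun_prop) _ _),
        aux_legendre_orth p _ hd, aux_legendre_orth (p + 1) _ hd', sub_zero]
    rw [h0]
    simp only [eval_sub, aux_legendre_one, aux_legendre_neg_one, pow_succ]
    ring
  have hsq : ((-1 : ℝ) ^ p) * (-1) ^ p = 1 := by
    rw [← mul_pow]; norm_num
  simp only [recon, derivative_sub (f := v), derivative_smul, eval_sub (p := derivative v),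
    eval_smul, smul_eq_mul, sub_mul, mul_assoc]
  rw [intervalIntegral.integral_sub
        (Continuous.intervalIntegrable (by fun_prop) _ _)
        (Continuous.intervalIntegrable (by fun_prop) _ _)]
  simp only [← mul_assoc]
  simp only [mul_assoc (v.eval (-1) * (-1 : ℝ) ^ p / 2)]
  rw [intervalIntegral.integral_const_mul, key]
  linear_combination (v.eval (-1) * w.eval (-1)) * hsq
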